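/- arXiv:2011.14047 — 2 statements merged into one kernel-verified Lean document; each statement's English description precedes it below -/
import Mathlib

section
/- Let N be a positive integer, M ⊆ {1,…,N} a set of missing-feature indices, and let x, x̂ ∈ ℝ^N satisfy x̂_n = x_n for every n ∉ M. Let w ∈ ℝ^N and b ∈ ℝ. If |⟨w, x̂⟩ + b| > |∑_{n ∈ M} w_n (x_n − x̂_n)|, then (⟨w, x⟩ + b)·(⟨w, x̂⟩ + b) > 0; that is, the classifier assigns x and its reconstruction x̂ the same strict sign, so x is classified in the same class as x̂. -/
theorem mul_pos_of_abs_sub_lt_abs_right {R : Type*} [Ring R] [LinearOrder R] [IsStrictOrderedRing R]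
    {a b : R} (h : |a - b| < |b|) : 0 < a * b := by
  rcases le_or_gt 0 b with hb | hb
  · rw [abs_of_nonneg hb] at h
    have ha : 0 < a := (sub_lt_self_iff b).mp (abs_sub_lt_iff.mp h).2
    exact mul_pos ha ((abs_nonneg _).trans_lt h)
  · rw [abs_of_neg hb] at h
    have ha : a < 0 := by simpa only [neg_add_cancel] using sub_lt_iff_lt_add.mp (abs_lt.mp h).2
    exact mul_pos_of_neg_of_neg ha hb

section Features

variable {ι R : Type*} [Fintype ι] {M : Finset ι} {x xhat : ι → R}

theorem sum_mul_sub_eq_of_forall_notMem_eq [NonUnitalNonAssocRing R]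
    (hobs : ∀ n, n ∉ M → xhat n = x n) (w : ι → R) :
    ∑ n ∈ M, w n * (x n - xhat n) = ∑ n, w n * x n - ∑ n, w n * xhat n :=
  calc
    ∑ n ∈ M, w n * (x n - xhat n) = ∑ n, w n * (x n - xhat n) :=
      Finset.sum_subset (Finset.subset_univ M) fun n _ hn => by
        rw [hobs n hn, sub_self, mul_zero]
    _ = ∑ n, w n * x n - ∑ n, w n * xhat n := by
      simp only [mul_sub, Finset.sum_sub_distrib]

theorem lemma1_two_class_general [Ring R] [LinearOrder R] [IsStrictOrderedRing R]
    (hobs : ∀ n, n ∉ M → xhat n = x n) (w : ι → R) (b : R)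
    (hmargin : |∑ n ∈ M, w n * (x n - xhat n)| < |(∑ n, w n * xhat n) + b|) :
    0 < ((∑ n, w n * x n) + b) * ((∑ n, w n * xhat n) + b) := by
  apply mul_pos_of_abs_sub_lt_abs_right
  rwa [add_sub_add_right_eq_sub, ← sum_mul_sub_eq_of_forall_notMem_eq hobs]

end Features

/-- Two-class combined formulation of Lemma 1: if the reconstruction `x̂`
matches `x` on all observed (non-missing) features and the classifier margin
`|⟨w, x̂⟩ + b|` strictly dominates the inner product of the weights with the
reconstruction error on the missing features, then `x` and `x̂` get the same
strict classification sign. -/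
theorem lemma1_two_class (N : ℕ) (hN : 0 < N) (M : Finset (Fin N))
    (x xhat : Fin N → ℝ) (hobs : ∀ n, n ∉ M → xhat n = x n)
    (w : Fin N → ℝ) (b : ℝ)
    (hmargin : |(∑ n, w n * xhat n) + b| > |∑ n ∈ M, w n * (x n - xhat n)|) :
    ((∑ n, w n * x n) + b) * ((∑ n, w n * xhat n) + b) > 0 :=
  lemma1_two_class_general hobs w b hmargin
end

section
/- Let L ≥ 1 and let an L-layer ReLU network on ℝ^{N₀} be given by matrices W_l ∈ ℝ^{N_{l−1}×N_l}, biases B_l ∈ ℝ^{N_l} (l = 1,…,L), readout w ∈ ℝ^{N_L}, b ∈ ℝ, with decision function f as defined below, and set A = ‖w‖ · ∏_{l=2}^{L} ‖W_l‖₂. Let M ⊆ {1,…,N₀} be a set of missing-feature indices and let x, x̂ ∈ ℝ^{N₀} satisfy x̂_n = x_n for every n ∉ M; set e = x − x̂ (so e is supported on M). If for some ε > 0 one has f(x̂) > ε and ε ≥ A · ‖W₁ᵀ e‖, then f(x) > 0. -/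
open Matrix

/-- The Euclidean norm of a finitely-indexed real vector. -/
noncomputable def euclNorm {ι : Type*} [Fintype ι] (v : ι → ℝ) : ℝ :=
  Real.sqrt (∑ j, (v j) ^ 2)

/-- The operator (spectral) norm of the linear map `z ↦ Wᵀz` with respect to
Euclidean norms. -/
noncomputable def specNorm {p q : ℕ} (W : Matrix (Fin p) (Fin q) ℝ) : ℝ :=
  ‖LinearMap.toContinuousLinearMap
      (Matrix.toEuclideanLin (Wᵀ) :
        EuclideanSpace ℝ (Fin p) →ₗ[ℝ] EuclideanSpace ℝ (Fin q))‖

/-- Layer outputs of an `L`-layer ReLU network: `x^(0) = x` and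
`x^(l) = ReLU(Wₗᵀ x^(l-1) + Bₗ)`, where (because of 0-based indexing) the
paper's `W_l, B_l` are `W (l-1), B (l-1)` here, and ReLU is applied
entrywise as `t ↦ max t 0`. -/
def layerOut (N : ℕ → ℕ) (W : ∀ l, Matrix (Fin (N l)) (Fin (N (l + 1))) ℝ)
    (B : ∀ l, Fin (N (l + 1)) → ℝ) (x : Fin (N 0) → ℝ) :
    ∀ l, Fin (N l) → ℝ
  | 0 => x
  | l + 1 => fun j => max (((W l)ᵀ.mulVec (layerOut N W B x l)) j + B l j) 0

/-!
Translation by a bias and the entrywise ReLU do not increase Euclidean distances, so layer `l`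
stretches the distance between two outputs of the previous layer by a factor of at most `‖Wₗ‖₂`.
Using this for every layer but the first, whose matrix is left acting on `e = x - x̂`, and
Cauchy–Schwarz for the readout, gives `|f x - f x̂| ≤ A ‖W₁ᵀe‖ ≤ ε < f x̂`.
-/

section EuclideanNorm

variable {ι : Type*} [Fintype ι]

theorem euclNorm_eq_norm_toLp (v : ι → ℝ) : euclNorm v = ‖WithLp.toLp 2 v‖ := by
  simp only [euclNorm, EuclideanSpace.norm_eq, Real.norm_eq_abs, sq_abs]

theorem euclNorm_nonneg (v : ι → ℝ) : 0 ≤ euclNorm v :=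
  Real.sqrt_nonneg _

theorem euclNorm_le_euclNorm_of_abs_le {u v : ι → ℝ} (h : ∀ j, |u j| ≤ |v j|) :
    euclNorm u ≤ euclNorm v :=
  Real.sqrt_le_sqrt (Finset.sum_le_sum fun j _ => sq_le_sq.mpr (h j))

theorem abs_dotProduct_le_euclNorm_mul_euclNorm (u v : ι → ℝ) :
    |u ⬝ᵥ v| ≤ euclNorm u * euclNorm v := by
  simpa only [euclNorm_eq_norm_toLp, EuclideanSpace.inner_toLp_toLp, star_trivial,
    dotProduct_comm v u] using abs_real_inner_le_norm (WithLp.toLp 2 u) (WithLp.toLp 2 v)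

theorem euclNorm_comp_sub_comp_le {σ : ℝ → ℝ} (hσ : LipschitzWith 1 σ) (u v : ι → ℝ) :
    euclNorm (σ ∘ u - σ ∘ v) ≤ euclNorm (u - v) :=
  euclNorm_le_euclNorm_of_abs_le fun j => by
    simpa only [Pi.sub_apply, Function.comp_apply, Real.dist_eq, NNReal.coe_one, one_mul]
      using hσ.dist_le_mul (u j) (v j)

end EuclideanNorm

section SpectralNorm

variable {p q : ℕ} (W : Matrix (Fin p) (Fin q) ℝ)

theorem specNorm_nonneg : 0 ≤ specNorm W :=
  norm_nonneg _

theorem euclNorm_transpose_mulVec_le (v : Fin p → ℝ) :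
    euclNorm (Wᵀ *ᵥ v) ≤ specNorm W * euclNorm v := by
  rw [euclNorm_eq_norm_toLp, euclNorm_eq_norm_toLp]
  exact (LinearMap.toContinuousLinearMap (toEuclideanLin Wᵀ)).le_opNorm (WithLp.toLp 2 v)

end SpectralNorm

section Network

variable (N : ℕ → ℕ) (W : ∀ l, Matrix (Fin (N l)) (Fin (N (l + 1))) ℝ)
  (B : ∀ l, Fin (N (l + 1)) → ℝ) (x y : Fin (N 0) → ℝ)

theorem euclNorm_layerOut_succ_sub_le (l : ℕ) :
    euclNorm (layerOut N W B x (l + 1) - layerOut N W B y (l + 1)) ≤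
      euclNorm ((W l)ᵀ *ᵥ (layerOut N W B x l - layerOut N W B y l)) :=
  calc euclNorm (layerOut N W B x (l + 1) - layerOut N W B y (l + 1))
    _ ≤ euclNorm (((W l)ᵀ *ᵥ layerOut N W B x l + B l) -
          ((W l)ᵀ *ᵥ layerOut N W B y l + B l)) :=
      euclNorm_comp_sub_comp_le (LipschitzWith.id.max_const 0) _ _
    _ = euclNorm ((W l)ᵀ *ᵥ (layerOut N W B x l - layerOut N W B y l)) := by
      rw [add_sub_add_right_eq_sub, mulVec_sub]

theorem euclNorm_layerOut_sub_le {L : ℕ} (hL : 1 ≤ L) :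
    euclNorm (layerOut N W B x L - layerOut N W B y L) ≤
      (∏ l ∈ Finset.Ico 1 L, specNorm (W l)) * euclNorm ((W 0)ᵀ *ᵥ (x - y)) := by
  induction L, hL using Nat.le_induction with
  | base =>
    rw [Finset.Ico_self, Finset.prod_empty, one_mul]
    exact euclNorm_layerOut_succ_sub_le N W B x y 0
  | succ k hk ih =>
    calc euclNorm (layerOut N W B x (k + 1) - layerOut N W B y (k + 1))
      _ ≤ euclNorm ((W k)ᵀ *ᵥ (layerOut N W B x k - layerOut N W B y k)) :=
        euclNorm_layerOut_succ_sub_le N W B x y k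
      _ ≤ specNorm (W k) * euclNorm (layerOut N W B x k - layerOut N W B y k) :=
        euclNorm_transpose_mulVec_le _ _
      _ ≤ specNorm (W k) *
          ((∏ l ∈ Finset.Ico 1 k, specNorm (W l)) * euclNorm ((W 0)ᵀ *ᵥ (x - y))) :=
        mul_le_mul_of_nonneg_left ih (specNorm_nonneg _)
      _ = (∏ l ∈ Finset.Ico 1 (k + 1), specNorm (W l)) * euclNorm ((W 0)ᵀ *ᵥ (x - y)) := by
        rw [Finset.prod_Ico_succ_top hk]
        ring

theorem abs_dotProduct_layerOut_sub_le {L : ℕ} (hL : 1 ≤ L) (w : Fin (N L) → ℝ) :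
    |w ⬝ᵥ layerOut N W B x L - w ⬝ᵥ layerOut N W B y L| ≤
      euclNorm w * (∏ l ∈ Finset.Ico 1 L, specNorm (W l)) *
        euclNorm ((W 0)ᵀ *ᵥ (x - y)) := by
  rw [← dotProduct_sub, mul_assoc]
  exact (abs_dotProduct_le_euclNorm_mul_euclNorm _ _).trans <|
    mul_le_mul_of_nonneg_left (euclNorm_layerOut_sub_le N W B x y hL) (euclNorm_nonneg w)

end Network

/-- The positive-class case of Proposition 2 (multilayer-perceptron sufficient
condition): if the reconstruction `x̂` matches `x` on all observed
(non-missing) features and the margin `ε` dominates `A·‖W₁ᵀe‖` with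
`A = ‖w‖·∏_{l=2}^L ‖Wₗ‖₂` and `e = x − x̂`, then the ReLU network classifies
`x` in the same (positive) class as `x̂`. -/
theorem prop2_pos (L : ℕ) (hL : 1 ≤ L) (N : ℕ → ℕ)
    (W : ∀ l, Matrix (Fin (N l)) (Fin (N (l + 1))) ℝ)
    (B : ∀ l, Fin (N (l + 1)) → ℝ)
    (w : Fin (N L) → ℝ) (b : ℝ)
    (f : (Fin (N 0) → ℝ) → ℝ)
    (hf : ∀ x, f x = (∑ j, w j * layerOut N W B x L j) + b)
    (A : ℝ) (hA : A = euclNorm w * ∏ l ∈ Finset.Ico 1 L, specNorm (W l))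
    (M : Finset (Fin (N 0))) (x xhat : Fin (N 0) → ℝ)
    (hobs : ∀ n, n ∉ M → xhat n = x n)
    (e : Fin (N 0) → ℝ) (he : e = x - xhat)
    (ε : ℝ) (hε : 0 < ε)
    (hsep : f xhat > ε)
    (herr : ε ≥ A * euclNorm ((W 0)ᵀ.mulVec e)) :
    f x > 0 := by
  have hdiff : f x - f xhat = w ⬝ᵥ layerOut N W B x L - w ⬝ᵥ layerOut N W B xhat L := by
    rw [hf, hf, add_sub_add_right_eq_sub, dotProduct, dotProduct]
  have hbound : |f x - f xhat| ≤ A * euclNorm ((W 0)ᵀ *ᵥ e) := by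
    rw [hdiff, hA, he]
    exact abs_dotProduct_layerOut_sub_le N W B x xhat hL w
  linarith [neg_le_of_abs_le hbound]
end
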